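/- Let p ∈ (0, 1) and θ ∈ [0, ∞) be real numbers. Suppose f : 𝒜 → 𝒜 satisfies ‖2 μ f((a+b)/2) + 2 μ f((a−b)/2) − 2 f(μ a) + f(c c* c) − f(c) c* c − c (f(c))* c − c c* f(c)‖ ≤ θ(‖a‖^p + ‖b‖^p + ‖c‖^p) for all μ ∈ 𝕋 and all a, b, c ∈ 𝒜. Then there exists a unique J*-derivation D : 𝒜 → 𝒜 such that ‖f(a) − D(a)‖ ≤ (2^p θ/(2 − 2^p)) ‖a‖^p for all a ∈ 𝒜. -/

import Mathlib

open ContinuousLinearMap Filter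

variable {H K : Type*} [NormedAddCommGroup H] [InnerProductSpace ℂ H] [CompleteSpace H]
  [NormedAddCommGroup K] [InnerProductSpace ℂ K] [CompleteSpace K]

/-- `𝒜` is closed under the `J*`-triple product `x ↦ x x* x`. -/
def JStarClosed (𝒜 : Submodule ℂ (H →L[ℂ] K)) : Prop :=
  ∀ x : H →L[ℂ] K, x ∈ 𝒜 → (x ∘L adjoint x) ∘L x ∈ 𝒜

/-- The triple product `c c* c` as an element of `𝒜`. -/
noncomputable def cube (𝒜 : Submodule ℂ (H →L[ℂ] K)) (hA : JStarClosed 𝒜) (c : 𝒜) : 𝒜 :=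
  ⟨((c : H →L[ℂ] K) ∘L adjoint (c : H →L[ℂ] K)) ∘L (c : H →L[ℂ] K), hA c c.2⟩

/-- `D : 𝒜 → 𝒜` is a `J*`-derivation: it is `ℂ`-linear and satisfies
`D(c c* c) = D(c) c* c + c (D(c))* c + c c* D(c)`. -/
noncomputable def IsJStarDerivation (𝒜 : Submodule ℂ (H →L[ℂ] K)) (hA : JStarClosed 𝒜)
    (D : 𝒜 → 𝒜) : Prop :=
  (∀ a b : 𝒜, D (a + b) = D a + D b) ∧
  (∀ (z : ℂ) (a : 𝒜), D (z • a) = z • D a) ∧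
  (∀ c : 𝒜, (D (cube 𝒜 hA c) : H →L[ℂ] K) =
      ((D c : H →L[ℂ] K) ∘L adjoint (c : H →L[ℂ] K)) ∘L (c : H →L[ℂ] K) +
      ((c : H →L[ℂ] K) ∘L adjoint (D c : H →L[ℂ] K)) ∘L (c : H →L[ℂ] K) +
      ((c : H →L[ℂ] K) ∘L adjoint (c : H →L[ℂ] K)) ∘L (D c : H →L[ℂ] K))

/-- The defect of the generalized Jensen functional equation combined with the
`J*`-derivation identity, for a map `f : 𝒜 → 𝒜`, parameter `r` and scalar `μ`. -/
noncomputable def jensenDefect (𝒜 : Submodule ℂ (H →L[ℂ] K)) (hA : JStarClosed 𝒜)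
    (r : ℝ) (f : 𝒜 → 𝒜) (μ : ℂ) (a b c : 𝒜) : H →L[ℂ] K :=
  ((r : ℂ) * μ) • (f ((r : ℂ)⁻¹ • (a + b)) : H →L[ℂ] K) +
  ((r : ℂ) * μ) • (f ((r : ℂ)⁻¹ • (a - b)) : H →L[ℂ] K) -
  (2 : ℂ) • (f (μ • a) : H →L[ℂ] K) +
  (f (cube 𝒜 hA c) : H →L[ℂ] K) -
  ((f c : H →L[ℂ] K) ∘L adjoint (c : H →L[ℂ] K)) ∘L (c : H →L[ℂ] K) -
  ((c : H →L[ℂ] K) ∘L adjoint (f c : H →L[ℂ] K)) ∘L (c : H →L[ℂ] K) -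
  ((c : H →L[ℂ] K) ∘L adjoint (c : H →L[ℂ] K)) ∘L (f c : H →L[ℂ] K)

/-!
Putting `a = b = c = 0` gives `f 0 = 0`, so `c = 0` and `a = b = 0` decouple the Jensen and the
Leibniz inequalities. With `μ = 1` and `b = 0` the former reads
`‖f a - f (2 a) / 2‖ ≤ (2 ^ p θ / 4) ‖a‖ ^ p`, and since `p < 1` Hyers' sequence `2⁻ⁿ f (2ⁿ a)` is
dominated by a geometric series; call its limit `D a`. The Jensen defect of `D` vanishes, so `D` is
additive and commutes with the unit circle, which generates `ℂ` as a ring. The Leibniz defect is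
homogeneous of degree three, so at `2ⁿ c` it is divided by `8ⁿ` while its bound only grows like
`2 ^ (q n)` with `q < 3`. For uniqueness, the difference of two solutions is an additive map bounded
by a multiple of `‖a‖ ^ p`, hence zero.
-/

theorem subring_closure_complex_sphere : Subring.closure (Metric.sphere (0 : ℂ) 1) = ⊤ := by
  refine eq_top_iff.2 fun z _ => ?_
  have exp_mem (t : ℝ) : Complex.exp (t * Complex.I) ∈ Subring.closure (Metric.sphere (0 : ℂ) 1) :=
    Subring.subset_closure (by simp [Complex.norm_exp_ofReal_mul_I])
  obtain ⟨n, hn⟩ := exists_nat_gt ‖z‖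
  have hn0 : (0 : ℝ) < n := (norm_nonneg z).trans_lt hn
  set t := Real.arccos (‖z‖ / (2 * n))
  have norm_eq :
      (‖z‖ : ℂ) = n * (Complex.exp (t * Complex.I) + Complex.exp ((-t : ℝ) * Complex.I)) := by
    have hcos : Real.cos t = ‖z‖ / (2 * n) :=
      Real.cos_arccos (by linarith [show 0 ≤ ‖z‖ / (2 * n) by positivity])
        (by rw [div_le_one (by positivity)]; linarith)
    rw [Complex.ofReal_neg, ← Complex.two_cos, ← Complex.ofReal_cos, hcos]
    have hn' : (n : ℂ) ≠ 0 := by exact_mod_cast hn0.ne'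
    push_cast
    field_simp
  rw [← Complex.norm_mul_exp_arg_mul_I z, norm_eq]
  exact mul_mem (mul_mem (natCast_mem _ n) (add_mem (exp_mem t) (exp_mem (-t)))) (exp_mem _)

theorem map_smul_of_subring_closure_eq_top {R E F : Type*} [Ring R] [AddCommGroup E] [Module R E]
    [AddCommGroup F] [Module R F] {s : Set R} (hs : Subring.closure s = ⊤) (D : E →+ F)
    (hD : ∀ r ∈ s, ∀ a, D (r • a) = r • D a) (r : R) (a : E) : D (r • a) = r • D a := by
  induction (hs ▸ Subring.mem_top r : r ∈ Subring.closure s) using Subring.closure_induction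
    generalizing a with
  | mem r hr => exact hD r hr a
  | zero => simp only [zero_smul, map_zero]
  | one => simp only [one_smul]
  | add r₁ r₂ _ _ h₁ h₂ => simp only [add_smul, map_add, h₁, h₂]
  | neg r _ h => simp only [neg_smul, map_neg, h]
  | mul r₁ r₂ _ _ h₁ h₂ => simp only [mul_smul, h₁, h₂]

section DyadicRescale

variable {E F : Type*} [NormedAddCommGroup E] [NormedSpace ℝ E] [NormedAddCommGroup F]
  [NormedSpace ℝ F]

/-- The rescaling `a ↦ 2⁻ⁿ f (2ⁿ a)`; its pointwise limit as `n → ∞` is Hyers' approximation of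
`f` by an additive map. -/
noncomputable def dyadicRescale (f : E → F) (n : ℕ) (a : E) : F :=
  ((2 : ℝ) ^ n)⁻¹ • f ((2 : ℝ) ^ n • a)

theorem two_pow_smul_dyadicRescale (f : E → F) (n : ℕ) (a : E) :
    (2 : ℝ) ^ n • dyadicRescale f n a = f ((2 : ℝ) ^ n • a) :=
  smul_inv_smul₀ (by positivity) _

theorem norm_two_pow_smul_rpow (p : ℝ) (n : ℕ) (a : E) :
    ‖(2 : ℝ) ^ n • a‖ ^ p = ((2 : ℝ) ^ p) ^ n * ‖a‖ ^ p := by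
  rw [norm_smul, norm_pow, Real.norm_two, Real.mul_rpow (by positivity) (norm_nonneg a),
    Real.rpow_pow_comm zero_le_two]

theorem tendsto_inv_two_pow_smul_zero {p C : ℝ} {k : ℕ} (hpk : p < k) {g : ℕ → F}
    (hg : ∀ n, ‖g n‖ ≤ C * ((2 : ℝ) ^ p) ^ n) :
    Tendsto (fun n => ((2 : ℝ) ^ (k * n))⁻¹ • g n) atTop (nhds 0) := by
  have ratio_lt_one : (2 : ℝ) ^ p / 2 ^ k < 1 := by
    rw [div_lt_one (by positivity), ← Real.rpow_natCast]
    exact Real.rpow_lt_rpow_of_exponent_lt one_lt_two hpk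
  have bound_tendsto : Tendsto (fun n : ℕ => C * ((2 : ℝ) ^ p / 2 ^ k) ^ n) atTop (nhds 0) := by
    simpa only [mul_zero] using
      (tendsto_pow_atTop_nhds_zero_of_lt_one (by positivity) ratio_lt_one).const_mul C
  refine squeeze_zero_norm (fun n => ?_) bound_tendsto
  calc ‖((2 : ℝ) ^ (k * n))⁻¹ • g n‖ = ((2 : ℝ) ^ (k * n))⁻¹ * ‖g n‖ := by
        rw [norm_smul, norm_inv, norm_pow, Real.norm_two]
    _ ≤ ((2 : ℝ) ^ (k * n))⁻¹ * (C * ((2 : ℝ) ^ p) ^ n) := by gcongr; exact hg n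
    _ = C * ((2 : ℝ) ^ p / 2 ^ k) ^ n := by rw [div_pow, ← pow_mul]; ring

theorem addMonoidHom_eq_zero_of_norm_le_rpow {p C : ℝ} (hp : p < 1) (L : E →+ F)
    (hL : ∀ a, ‖L a‖ ≤ C * ‖a‖ ^ p) : L = 0 := by
  ext a
  have rescaled_tendsto := tendsto_inv_two_pow_smul_zero (p := p) (C := C * ‖a‖ ^ p) (k := 1)
    (by simpa only [Nat.cast_one] using hp) (g := fun n => L ((2 : ℝ) ^ n • a)) fun n => by
      refine (hL _).trans_eq ?_
      rw [norm_two_pow_smul_rpow]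
      ring
  refine tendsto_nhds_unique (tendsto_const_nhds.congr fun n => ?_) rescaled_tendsto
  have map_two_pow_smul : L ((2 : ℝ) ^ n • a) = (2 : ℝ) ^ n • L a := by
    simpa only [Nat.cast_pow, Nat.cast_ofNat] using map_natCast_smul L ℝ ℝ (2 ^ n) a
  rw [map_two_pow_smul, one_mul, inv_smul_smul₀ (by positivity)]

theorem eq_of_map_add_of_norm_sub_le_rpow {p C C' : ℝ} (hp : p < 1) {f D D' : E → F}
    (map_add_D : ∀ a b, D (a + b) = D a + D b) (map_add_D' : ∀ a b, D' (a + b) = D' a + D' b)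
    (hD : ∀ a, ‖f a - D a‖ ≤ C * ‖a‖ ^ p) (hD' : ∀ a, ‖f a - D' a‖ ≤ C' * ‖a‖ ^ p) : D = D' := by
  refine congrArg DFunLike.coe (sub_eq_zero.1 (addMonoidHom_eq_zero_of_norm_le_rpow (C := C' + C) hp
    (AddMonoidHom.mk' D map_add_D - AddMonoidHom.mk' D' map_add_D') fun a => ?_))
  calc ‖D a - D' a‖ = ‖(f a - D' a) - (f a - D a)‖ := by rw [sub_sub_sub_cancel_left]
    _ ≤ ‖f a - D' a‖ + ‖f a - D a‖ := norm_sub_le _ _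
    _ ≤ (C' + C) * ‖a‖ ^ p := by rw [add_mul]; exact add_le_add (hD' a) (hD a)

theorem exists_tendsto_dyadicRescale [CompleteSpace F] {p C : ℝ} (hp : p < 1) {f : E → F}
    (hf : ∀ a, ‖f a - (2 : ℝ)⁻¹ • f ((2 : ℝ) • a)‖ ≤ C * ‖a‖ ^ p) :
    ∃ D : E → F, (∀ a, Tendsto (dyadicRescale f · a) atTop (nhds (D a))) ∧
      ∀ a, ‖f a - D a‖ ≤ C / (1 - 2 ^ p / 2) * ‖a‖ ^ p := by
  have ratio_lt_one : (2 : ℝ) ^ p / 2 < 1 := by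
    rw [div_lt_one two_pos]
    exact Real.rpow_lt_self_of_one_lt one_lt_two hp
  have dist_succ_le (a : E) (n : ℕ) : dist (dyadicRescale f n a) (dyadicRescale f (n + 1) a) ≤
      C * ‖a‖ ^ p * ((2 : ℝ) ^ p / 2) ^ n :=
    calc dist (dyadicRescale f n a) (dyadicRescale f (n + 1) a)
        = ‖((2 : ℝ) ^ n)⁻¹ •
            (f ((2 : ℝ) ^ n • a) - (2 : ℝ)⁻¹ • f ((2 : ℝ) • (2 : ℝ) ^ n • a))‖ := by
          rw [dist_eq_norm, dyadicRescale, dyadicRescale, smul_sub, smul_smul, smul_smul,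
            pow_succ', mul_inv_rev]
      _ = ((2 : ℝ) ^ n)⁻¹ * ‖f ((2 : ℝ) ^ n • a) - (2 : ℝ)⁻¹ • f ((2 : ℝ) • (2 : ℝ) ^ n • a)‖ := by
          rw [norm_smul, norm_inv, norm_pow, Real.norm_two]
      _ ≤ ((2 : ℝ) ^ n)⁻¹ * (C * (((2 : ℝ) ^ p) ^ n * ‖a‖ ^ p)) := by
          rw [← norm_two_pow_smul_rpow]
          gcongr
          exact hf _
      _ = C * ‖a‖ ^ p * ((2 : ℝ) ^ p / 2) ^ n := by rw [div_pow]; ring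
  choose D hD using fun a => cauchySeq_tendsto_of_complete
    (cauchySeq_of_le_geometric _ _ ratio_lt_one (dist_succ_le a))
  refine ⟨D, hD, fun a => ?_⟩
  have dist_limit := dist_le_of_le_geometric_of_tendsto₀ _ _ ratio_lt_one (dist_succ_le a) (hD a)
  rwa [dyadicRescale, pow_zero, inv_one, one_smul, one_smul, dist_eq_norm,
    mul_div_right_comm] at dist_limit

end DyadicRescale

section CircleJensen

/-- The defect of Jensen's equation `2 f ((a + b) / 2) + 2 f ((a - b) / 2) = 2 f a`, twisted by a
scalar `μ`; its vanishing for all `‖μ‖ = 1` forces complex linearity of `f`. -/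
noncomputable def circleJensenDefect {E F : Type*} [AddCommGroup E] [Module ℂ E] [AddCommGroup F]
    [Module ℂ F] (f : E → F) (μ : ℂ) (a b : E) : F :=
  (2 * μ) • f ((2 : ℂ)⁻¹ • (a + b)) + (2 * μ) • f ((2 : ℂ)⁻¹ • (a - b)) - (2 : ℂ) • f (μ • a)

theorem isLinearMap_of_circleJensenDefect_eq_zero {E F : Type*} [AddCommGroup E] [Module ℂ E]
    [AddCommGroup F] [Module ℂ F] {D : E → F}
    (hD : ∀ μ : ℂ, ‖μ‖ = 1 → ∀ a b, circleJensenDefect D μ a b = 0) : IsLinearMap ℂ D := by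
  have jensen {μ : ℂ} (hμ : ‖μ‖ = 1) (a b : E) :
      μ • (D ((2 : ℂ)⁻¹ • (a + b)) + D ((2 : ℂ)⁻¹ • (a - b))) = D (μ • a) := by
    have h := hD μ hμ a b
    rw [circleJensenDefect, mul_smul, mul_smul, ← smul_add, ← smul_sub] at h
    rw [smul_add]
    exact sub_eq_zero.1 ((smul_eq_zero.1 h).resolve_left two_ne_zero)
  have map_add (x y : E) : D (x + y) = D x + D y := by
    have h := jensen norm_one (x + y) (x - y)
    rwa [one_smul, one_smul, show (2 : ℂ)⁻¹ • (x + y + (x - y)) = x by module,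
      show (2 : ℂ)⁻¹ • (x + y - (x - y)) = y by module, eq_comm] at h
  have map_circle_smul (μ : ℂ) (hμ : ‖μ‖ = 1) (a : E) : D (μ • a) = μ • D a := by
    rw [← jensen hμ a 0, ← map_add, show (2 : ℂ)⁻¹ • (a + 0) + (2 : ℂ)⁻¹ • (a - 0) = a by module]
  exact ⟨map_add, map_smul_of_subring_closure_eq_top subring_closure_complex_sphere
    (AddMonoidHom.mk' D map_add) fun μ hμ => map_circle_smul μ (mem_sphere_zero_iff_norm.1 hμ)⟩

variable {E F : Type*} [NormedAddCommGroup E] [NormedSpace ℂ E] [NormedAddCommGroup F]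
  [NormedSpace ℂ F]

theorem circleJensenDefect_dyadicRescale (f : E → F) (n : ℕ) (μ : ℂ) (a b : E) :
    circleJensenDefect (dyadicRescale f n) μ a b =
      ((2 : ℝ) ^ n)⁻¹ • circleJensenDefect f μ ((2 : ℝ) ^ n • a) ((2 : ℝ) ^ n • b) := by
  have pull_two_pow (z : ℂ) (x : E) : (2 : ℝ) ^ n • z • x = z • (2 : ℝ) ^ n • x := smul_comm _ _ _
  simp only [circleJensenDefect, dyadicRescale, pull_two_pow, smul_add ((2 : ℝ) ^ n),
    smul_sub ((2 : ℝ) ^ n)]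
  module

theorem exists_isLinearMap_tendsto_dyadicRescale [CompleteSpace F] {p θ : ℝ} (hp0 : 0 < p)
    (hp1 : p < 1) {f : E → F}
    (hf : ∀ μ : ℂ, ‖μ‖ = 1 → ∀ a b, ‖circleJensenDefect f μ a b‖ ≤ θ * (‖a‖ ^ p + ‖b‖ ^ p)) :
    ∃ D : E → F, IsLinearMap ℂ D ∧ (∀ a, Tendsto (dyadicRescale f · a) atTop (nhds (D a))) ∧
      ∀ a, ‖f a - D a‖ ≤ 2 ^ p * θ / (2 * (2 - 2 ^ p)) * ‖a‖ ^ p := by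
  have norm_sub_half_double_le (a : E) :
      ‖f a - (2 : ℝ)⁻¹ • f ((2 : ℝ) • a)‖ ≤ 2 ^ p * θ / 4 * ‖a‖ ^ p := by
    have h := hf 1 norm_one ((2 : ℝ) • a) 0
    have defect_eq : circleJensenDefect f 1 ((2 : ℝ) • a) 0 =
        (4 : ℝ) • (f a - (2 : ℝ)⁻¹ • f ((2 : ℝ) • a)) := by
      rw [circleJensenDefect, add_zero, sub_zero, one_smul,
        show (2 : ℂ)⁻¹ • (2 : ℝ) • a = a by module]
      module
    rw [defect_eq, norm_smul, Real.norm_ofNat, norm_zero, Real.zero_rpow hp0.ne', add_zero,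
      ← pow_one (2 : ℝ), norm_two_pow_smul_rpow, pow_one, pow_one] at h
    linarith
  obtain ⟨D, tendsto_D, norm_sub_le⟩ := exists_tendsto_dyadicRescale hp1 norm_sub_half_double_le
  refine ⟨D, isLinearMap_of_circleJensenDefect_eq_zero fun μ hμ a b => ?_, tendsto_D, fun a => ?_⟩
  · have defect_tendsto : Tendsto (fun n => circleJensenDefect (dyadicRescale f n) μ a b) atTop
        (nhds (circleJensenDefect D μ a b)) :=
      (((tendsto_D _).const_smul _).add ((tendsto_D _).const_smul _)).sub
        ((tendsto_D _).const_smul _)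
    refine tendsto_nhds_unique defect_tendsto ?_
    have rescaled_tendsto := tendsto_inv_two_pow_smul_zero (p := p) (k := 1)
      (C := θ * (‖a‖ ^ p + ‖b‖ ^ p)) (by simpa only [Nat.cast_one] using hp1)
      (g := fun n => circleJensenDefect f μ ((2 : ℝ) ^ n • a) ((2 : ℝ) ^ n • b)) fun n => by
        refine (hf μ hμ _ _).trans_eq ?_
        rw [norm_two_pow_smul_rpow, norm_two_pow_smul_rpow]
        ring
    simpa only [one_mul, ← circleJensenDefect_dyadicRescale] using rescaled_tendsto
  · refine (norm_sub_le a).trans_eq ?_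
    rw [show (1 : ℝ) - 2 ^ p / 2 = (2 - 2 ^ p) / 2 by ring, div_div_eq_mul_div,
      ← div_div (2 ^ p * θ)]
    ring

end CircleJensen

section TripleProduct

/-- The right-hand side `x c* c + c x* c + c c* x` of the `J*`-derivation rule, where `x` stands for
the value of the derivation at `c`. -/
noncomputable def tripleLeibniz (c x : H →L[ℂ] K) : H →L[ℂ] K :=
  (x ∘L adjoint c) ∘L c + (c ∘L adjoint x) ∘L c + (c ∘L adjoint c) ∘L x

theorem continuous_tripleLeibniz (c : H →L[ℂ] K) : Continuous (tripleLeibniz c) := by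
  have continuous_adjoint : Continuous fun x : H →L[ℂ] K => adjoint x :=
    (adjoint (𝕜 := ℂ)).continuous
  unfold tripleLeibniz
  fun_prop

theorem tripleLeibniz_zero_left (x : H →L[ℂ] K) : tripleLeibniz 0 x = 0 := by
  simp only [tripleLeibniz, map_zero, comp_zero, zero_comp, add_zero]

theorem tripleLeibniz_smul_smul (t : ℝ) (c x : H →L[ℂ] K) :
    tripleLeibniz (t • c) (t • x) = t ^ 3 • tripleLeibniz c x := by
  simp only [tripleLeibniz, ← Complex.coe_smul t, map_smulₛₗ, Complex.conj_ofReal, smul_comp,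
    comp_smul]
  module

variable {𝒜 : Submodule ℂ (H →L[ℂ] K)} {hA : JStarClosed 𝒜}

theorem cube_zero : cube 𝒜 hA 0 = 0 :=
  Subtype.ext (by simp only [cube, ZeroMemClass.coe_zero, comp_zero])

theorem cube_real_smul (t : ℝ) (c : 𝒜) : cube 𝒜 hA (t • c) = t ^ 3 • cube 𝒜 hA c := by
  refine Subtype.ext ?_
  change ((t • (c : H →L[ℂ] K)) ∘L adjoint (t • (c : H →L[ℂ] K))) ∘L (t • (c : H →L[ℂ] K)) =
    t ^ 3 • ((c : H →L[ℂ] K) ∘L adjoint (c : H →L[ℂ] K)) ∘L (c : H →L[ℂ] K)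
  simp only [← Complex.coe_smul t, map_smulₛₗ, Complex.conj_ofReal, smul_comp, comp_smul]
  module

theorem isJStarDerivation_iff {D : 𝒜 → 𝒜} : IsJStarDerivation 𝒜 hA D ↔
    IsLinearMap ℂ D ∧ ∀ c : 𝒜, (D (cube 𝒜 hA c) : H →L[ℂ] K) = tripleLeibniz c (D c) :=
  ⟨fun h => ⟨⟨h.1, h.2.1⟩, h.2.2⟩, fun h => ⟨h.1.map_add, h.1.map_smul, h.2⟩⟩

theorem jensenDefect_two_eq (f : 𝒜 → 𝒜) (μ : ℂ) (a b c : 𝒜) :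
    jensenDefect 𝒜 hA 2 f μ a b c =
      ((circleJensenDefect f μ a b : 𝒜) : H →L[ℂ] K) +
        ((f (cube 𝒜 hA c) : H →L[ℂ] K) - tripleLeibniz c (f c)) := by
  simp only [jensenDefect, circleJensenDefect, tripleLeibniz, Complex.ofReal_ofNat,
    Submodule.coe_sub, Submodule.coe_add, Submodule.coe_smul]
  abel

theorem map_cube_of_tendsto_dyadicRescale {q η : ℝ} (hq : q < 3) {f D : 𝒜 → 𝒜}
    (hD : ∀ a, Tendsto (dyadicRescale f · a) atTop (nhds (D a)))
    (hf : ∀ c : 𝒜, ‖(f (cube 𝒜 hA c) : H →L[ℂ] K) - tripleLeibniz c (f c)‖ ≤ η * ‖c‖ ^ q)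
    (c : 𝒜) : (D (cube 𝒜 hA c) : H →L[ℂ] K) = tripleLeibniz c (D c) := by
  have coe_tendsto (a : 𝒜) :
      Tendsto (fun n => ((dyadicRescale f n a : 𝒜) : H →L[ℂ] K)) atTop (nhds (D a)) :=
    (continuous_subtype_val.tendsto _).comp (hD a)
  have defect_tendsto := ((coe_tendsto (cube 𝒜 hA c)).comp
    (tendsto_id.const_mul_atTop' three_pos)).sub
    (((continuous_tripleLeibniz c).tendsto _).comp (coe_tendsto c))
  refine sub_eq_zero.1 (tendsto_nhds_unique defect_tendsto ?_)
  have rescaled_tendsto := tendsto_inv_two_pow_smul_zero (p := q) (k := 3) (C := η * ‖c‖ ^ q)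
    (by exact_mod_cast hq) (g := fun n => (f (cube 𝒜 hA ((2 : ℝ) ^ n • c)) : H →L[ℂ] K) -
      tripleLeibniz ((2 : ℝ) ^ n • c : 𝒜) (f ((2 : ℝ) ^ n • c))) fun n => by
      have rpow_norm_eq : ‖(2 : ℝ) ^ n • c‖ ^ q = _ := norm_two_pow_smul_rpow q n c
      refine (hf _).trans_eq ?_
      rw [rpow_norm_eq]
      ring
  refine rescaled_tendsto.congr fun n => ?_
  have coe_real_smul (t : ℝ) (x : 𝒜) : ((t • x : 𝒜) : H →L[ℂ] K) = t • (x : H →L[ℂ] K) := rfl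
  rw [cube_real_smul, ← pow_mul, mul_comm n, ← two_pow_smul_dyadicRescale f n,
    ← two_pow_smul_dyadicRescale f (3 * n), coe_real_smul, coe_real_smul, coe_real_smul,
    tripleLeibniz_smul_smul, ← pow_mul, mul_comm n, ← smul_sub, inv_smul_smul₀ (by positivity)]
  rfl

theorem map_zero_of_jensenDefect_eq_zero {f : 𝒜 → 𝒜} (hf : jensenDefect 𝒜 hA 2 f 1 0 0 0 = 0) :
    f 0 = 0 := by
  rw [jensenDefect_two_eq, cube_zero, ZeroMemClass.coe_zero, tripleLeibniz_zero_left, sub_zero,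
    ← Submodule.coe_add, Submodule.coe_eq_zero, circleJensenDefect, add_zero, sub_zero, smul_zero,
    smul_zero] at hf
  have three_smul_eq_zero : (3 : ℂ) • f 0 = 0 := Eq.trans (by module) hf
  exact (smul_eq_zero.1 three_smul_eq_zero).resolve_left three_ne_zero

theorem jensenDefect_two_zero_right {f : 𝒜 → 𝒜} (hf : f 0 = 0) (μ : ℂ) (a b : 𝒜) :
    jensenDefect 𝒜 hA 2 f μ a b 0 = ((circleJensenDefect f μ a b : 𝒜) : H →L[ℂ] K) := by
  rw [jensenDefect_two_eq, cube_zero, hf, ZeroMemClass.coe_zero, tripleLeibniz_zero_left, sub_zero,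
    add_zero]

theorem jensenDefect_two_zero_left {f : 𝒜 → 𝒜} (hf : f 0 = 0) (c : 𝒜) :
    jensenDefect 𝒜 hA 2 f 1 0 0 c = (f (cube 𝒜 hA c) : H →L[ℂ] K) - tripleLeibniz c (f c) := by
  rw [jensenDefect_two_eq, circleJensenDefect, add_zero, sub_zero, smul_zero, smul_zero, hf,
    smul_zero, smul_zero, add_zero, sub_zero, ZeroMemClass.coe_zero, zero_add]

theorem HUR_stability_JStarDerivation_general
    (𝒜 : Submodule ℂ (H →L[ℂ] K)) (hclosed : IsClosed (𝒜 : Set (H →L[ℂ] K)))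
    (hA : JStarClosed 𝒜)
    (p q θ η C : ℝ) (hp0 : 0 < p) (hp1 : p < 1) (hq0 : 0 < q) (hq3 : q < 3)
    (hC : 2 ^ p * θ / (2 * (2 - 2 ^ p)) ≤ C)
    (f : 𝒜 → 𝒜)
    (hineq : ∀ (μ : ℂ), ‖μ‖ = 1 → ∀ a b c : 𝒜,
      ‖jensenDefect 𝒜 hA 2 f μ a b c‖ ≤ θ * (‖a‖ ^ p + ‖b‖ ^ p) + η * ‖c‖ ^ q) :
    ∃! D : 𝒜 → 𝒜, IsJStarDerivation 𝒜 hA D ∧ ∀ a : 𝒜, ‖f a - D a‖ ≤ C * ‖a‖ ^ p := by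
  have : CompleteSpace 𝒜 := hclosed.completeSpace_coe
  have zero_rpow_p : ‖(0 : 𝒜)‖ ^ p = 0 :=
    (congrArg (· ^ p) norm_zero).trans (Real.zero_rpow hp0.ne')
  have zero_rpow_q : ‖(0 : 𝒜)‖ ^ q = 0 :=
    (congrArg (· ^ q) norm_zero).trans (Real.zero_rpow hq0.ne')
  have f_zero : f 0 = 0 := map_zero_of_jensenDefect_eq_zero (hA := hA) <| norm_le_zero_iff.1 <| by
    simpa only [zero_rpow_p, zero_rpow_q, add_zero, mul_zero] using hineq 1 norm_one 0 0 0
  have jensen_bound (μ : ℂ) (hμ : ‖μ‖ = 1) (a b : 𝒜) :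
      ‖circleJensenDefect f μ a b‖ ≤ θ * (‖a‖ ^ p + ‖b‖ ^ p) := by
    change ‖((circleJensenDefect f μ a b : 𝒜) : H →L[ℂ] K)‖ ≤ _
    simpa only [jensenDefect_two_zero_right f_zero, zero_rpow_q, mul_zero, add_zero] using
      hineq μ hμ a b 0
  have leibniz_bound (c : 𝒜) :
      ‖(f (cube 𝒜 hA c) : H →L[ℂ] K) - tripleLeibniz c (f c)‖ ≤ η * ‖c‖ ^ q := by
    simpa only [jensenDefect_two_zero_left f_zero, zero_rpow_p, mul_zero, zero_add, add_zero] using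
      hineq 1 norm_one 0 0 c
  have hyers_limit := exists_isLinearMap_tendsto_dyadicRescale (E := 𝒜) (F := 𝒜) (f := f) (θ := θ)
    hp0 hp1 jensen_bound
  obtain ⟨D, linear_D, tendsto_D, norm_sub_le⟩ := hyers_limit
  have norm_sub_le_C (a : 𝒜) : ‖f a - D a‖ ≤ C * ‖a‖ ^ p :=
    (norm_sub_le a).trans (mul_le_mul_of_nonneg_right hC (Real.rpow_nonneg (norm_nonneg a) p))
  have leibniz_D := map_cube_of_tendsto_dyadicRescale hq3 tendsto_D leibniz_bound
  exact ⟨D, ⟨isJStarDerivation_iff.2 ⟨linear_D, leibniz_D⟩, norm_sub_le_C⟩,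
    fun D' ⟨derivation_D', norm_sub_le'⟩ => eq_of_map_add_of_norm_sub_le_rpow (E := 𝒜) (F := 𝒜) hp1
      derivation_D'.1 linear_D.map_add norm_sub_le' norm_sub_le_C⟩

end TripleProduct

/-- Corollary 2.3 (Hyers–Ulam–Rassias stability of `J*`-derivations, power control,
`r = 2`): there is a unique `J*`-derivation `D` with
`‖f(a) − D(a)‖ ≤ 2^p θ/(2 − 2^p) ‖a‖^p`. -/
theorem HUR_stability_JStarDerivation
    (𝒜 : Submodule ℂ (H →L[ℂ] K)) (hclosed : IsClosed (𝒜 : Set (H →L[ℂ] K)))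
    (hA : JStarClosed 𝒜)
    (p θ : ℝ) (hp0 : 0 < p) (hp1 : p < 1) (hθ : 0 ≤ θ)
    (f : 𝒜 → 𝒜)
    (hineq : ∀ (μ : ℂ), ‖μ‖ = 1 → ∀ a b c : 𝒜,
      ‖jensenDefect 𝒜 hA 2 f μ a b c‖ ≤ θ * (‖a‖ ^ p + ‖b‖ ^ p + ‖c‖ ^ p)) :
    ∃! D : 𝒜 → 𝒜,
      IsJStarDerivation 𝒜 hA D ∧
      ∀ a : 𝒜, ‖f a - D a‖ ≤ 2 ^ p * θ / (2 - 2 ^ p) * ‖a‖ ^ p := by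
  have two_rpow_lt : (2 : ℝ) ^ p < 2 := Real.rpow_lt_self_of_one_lt one_lt_two hp1
  refine HUR_stability_JStarDerivation_general 𝒜 hclosed hA p p θ θ _ hp0 hp1 hp0 (by linarith) ?_ f
    fun μ hμ a b c => (hineq μ hμ a b c).trans_eq (mul_add _ _ _)
  exact div_le_div_of_nonneg_left (by positivity) (by linarith) (by linarith)
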